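/- RR_4(9,4) = 432. That is, 432 is the least positive integer N such that every 2-coloring χ of {1,…,N} admits x, y, z ∈ {1,…,N} with 4x + 9y = z and χ(x) = χ(y) = χ(z) = 0, or x, y, z ∈ {1,…,N} with 4x + 4y = z and χ(x) = χ(y) = χ(z) = 1. -/

import Mathlib

/-!
Lower bound: for `3 ≤ t` the coloring `blockColoring t` has no solution to
`t * x + (2 * t + 1) * y = z` of color `0` at all, and none to `t * x + t * y = z` of color `1`
below `t * (6 * t ^ 2 + 2 * t + 4)`, which is `432` for `t = 4`.

Upper bound: in a coloring of `{1, …, 432}` without the required solutions, once two of the three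
values in a solution have the color of its equation, the third has the other color. Propagating
this rule from one assumed color at a time shows that `1` has color `0`, and then that `3` can have
neither color.
-/

/-- The coloring `χ` of `{1, …, N}` has a solution to `t * x + q * y = z` that is monochromatic of
color `c`. Only the values of `χ` on `{1, …, N}` matter. -/
def HasMonoSolution (χ : ℕ → Fin 2) (c : Fin 2) (t q N : ℕ) : Prop :=
  ∃ x y z : ℕ, x ∈ Finset.Icc 1 N ∧ y ∈ Finset.Icc 1 N ∧ z ∈ Finset.Icc 1 N ∧
    t * x + q * y = z ∧ χ x = c ∧ χ y = c ∧ χ z = c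

/-- The color class `c` of the coloring `χ` of `{1, …, N}` contains no solution to
`t * x + q * y = z`. A separate definition, rather than a bare negation, so that the propagation
rules below can be applied to it by dot notation. -/
def IsSolutionFree (χ : ℕ → Fin 2) (c : Fin 2) (t q N : ℕ) : Prop :=
  ¬ HasMonoSolution χ c t q N

/-- Every coloring of `{1, …, N}` has one of the two monochromatic solutions in the definition of
the off-diagonal Rado number `RR_t(q, s)`, which is thus the least positive `N` with this
property. -/
def ForcesMonoSolution (t q s N : ℕ) : Prop :=
  ∀ χ : ℕ → Fin 2, HasMonoSolution χ 0 t q N ∨ HasMonoSolution χ 1 t s N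

theorem eq_rev_of_ne {a b : Fin 2} (h : a ≠ b) : a = b.rev := by
  decide +revert

namespace IsSolutionFree

variable {χ : ℕ → Fin 2} {c : Fin 2} {t q N x y z : ℕ}

theorem false_of_eq (h : IsSolutionFree χ c t q N) (χx : χ x = c) (χy : χ y = c) (χz : χ z = c)
    (hx : x ∈ Finset.Icc 1 N := by exact Finset.mem_Icc.mpr (by omega))
    (hy : y ∈ Finset.Icc 1 N := by exact Finset.mem_Icc.mpr (by omega))
    (hz : z ∈ Finset.Icc 1 N := by exact Finset.mem_Icc.mpr (by omega))
    (hxyz : t * x + q * y = z := by norm_num) : False :=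
  h ⟨x, y, z, hx, hy, hz, hxyz, χx, χy, χz⟩

theorem output_eq_rev (h : IsSolutionFree χ c t q N) (χx : χ x = c) (χy : χ y = c)
    (hx : x ∈ Finset.Icc 1 N := by exact Finset.mem_Icc.mpr (by omega))
    (hy : y ∈ Finset.Icc 1 N := by exact Finset.mem_Icc.mpr (by omega))
    (hz : z ∈ Finset.Icc 1 N := by exact Finset.mem_Icc.mpr (by omega))
    (hxyz : t * x + q * y = z := by norm_num) : χ z = c.rev :=
  eq_rev_of_ne fun χz => h.false_of_eq χx χy χz hx hy hz hxyz

theorem left_eq_rev (h : IsSolutionFree χ c t q N) (χy : χ y = c) (χz : χ z = c)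
    (hx : x ∈ Finset.Icc 1 N := by exact Finset.mem_Icc.mpr (by omega))
    (hy : y ∈ Finset.Icc 1 N := by exact Finset.mem_Icc.mpr (by omega))
    (hz : z ∈ Finset.Icc 1 N := by exact Finset.mem_Icc.mpr (by omega))
    (hxyz : t * x + q * y = z := by norm_num) : χ x = c.rev :=
  eq_rev_of_ne fun χx => h.false_of_eq χx χy χz hx hy hz hxyz

theorem right_eq_rev (h : IsSolutionFree χ c t q N) (χx : χ x = c) (χz : χ z = c)
    (hx : x ∈ Finset.Icc 1 N := by exact Finset.mem_Icc.mpr (by omega))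
    (hy : y ∈ Finset.Icc 1 N := by exact Finset.mem_Icc.mpr (by omega))
    (hz : z ∈ Finset.Icc 1 N := by exact Finset.mem_Icc.mpr (by omega))
    (hxyz : t * x + q * y = z := by norm_num) : χ y = c.rev :=
  eq_rev_of_ne fun χy => h.false_of_eq χx χy χz hx hy hz hxyz

theorem diag_eq_rev (h : IsSolutionFree χ c t q N) (χz : χ z = c)
    (hx : x ∈ Finset.Icc 1 N := by exact Finset.mem_Icc.mpr (by omega))
    (hz : z ∈ Finset.Icc 1 N := by exact Finset.mem_Icc.mpr (by omega))
    (hxz : t * x + q * x = z := by norm_num) : χ x = c.rev :=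
  eq_rev_of_ne fun χx => h.false_of_eq χx χx χz hx hx hz hxz

end IsSolutionFree

section UpperBound

variable {χ : ℕ → Fin 2} {N : ℕ}

theorem color_one_eq_zero (hN : 420 ≤ N) (h₀ : IsSolutionFree χ 0 4 9 N)
    (h₁ : IsSolutionFree χ 1 4 4 N) : χ 1 = 0 := by
  refine eq_rev_of_ne fun χ1 : χ 1 = 1 => ?_
  have χ8 : χ 8 = 0 := h₁.output_eq_rev χ1 χ1
  have χ104 : χ 104 = 1 := h₀.output_eq_rev χ8 χ8
  have χ420 : χ 420 = 0 := h₁.output_eq_rev χ1 χ104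
  have χ25 : χ 25 = 0 := h₁.right_eq_rev χ1 χ104
  have χ172 : χ 172 = 1 := h₀.output_eq_rev χ25 χ8
  have χ42 : χ 42 = 0 := h₁.right_eq_rev χ1 χ172
  have χ28 : χ 28 = 1 := h₀.right_eq_rev χ42 χ420
  have χ6 : χ 6 = 0 := h₁.right_eq_rev χ1 χ28
  have χ2 : χ 2 = 1 := h₀.right_eq_rev χ6 χ42
  have χ12 : χ 12 = 0 := h₁.output_eq_rev χ1 χ2
  have χ120 : χ 120 = 1 := h₀.output_eq_rev χ12 χ8
  exact h₁.false_of_eq χ2 χ28 χ120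

theorem color_three_eq_zero (hN : 432 ≤ N) (h₀ : IsSolutionFree χ 0 4 9 N)
    (h₁ : IsSolutionFree χ 1 4 4 N) (χ1 : χ 1 = 0) : χ 3 = 0 := by
  refine eq_rev_of_ne fun χ3 : χ 3 = 1 => ?_
  have χ24 : χ 24 = 0 := h₁.output_eq_rev χ3 χ3
  have χ105 : χ 105 = 1 := h₀.output_eq_rev χ24 χ1
  have χ432 : χ 432 = 0 := h₁.output_eq_rev χ3 χ105
  have χ220 : χ 220 = 1 := h₀.output_eq_rev χ1 χ24
  have χ52 : χ 52 = 0 := h₁.right_eq_rev χ3 χ220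
  have χ4 : χ 4 = 1 := h₀.diag_eq_rev χ52
  have χ28 : χ 28 = 0 := h₁.output_eq_rev χ3 χ4
  have χ32 : χ 32 = 0 := h₁.output_eq_rev χ4 χ4
  have χ328 : χ 328 = 1 := h₀.output_eq_rev χ28 χ24
  have χ78 : χ 78 = 0 := h₁.right_eq_rev χ4 χ328
  have χ6 : χ 6 = 1 := h₀.diag_eq_rev χ78
  have χ36 : χ 36 = 0 := h₁.output_eq_rev χ3 χ6
  exact h₀.false_of_eq χ36 χ32 χ432

theorem color_three_eq_one (hN : 296 ≤ N) (h₀ : IsSolutionFree χ 0 4 9 N)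
    (h₁ : IsSolutionFree χ 1 4 4 N) (χ1 : χ 1 = 0) : χ 3 = 1 := by
  refine eq_rev_of_ne fun χ3 : χ 3 = 0 => ?_
  have χ13 : χ 13 = 1 := h₀.output_eq_rev χ1 χ1
  have χ39 : χ 39 = 1 := h₀.output_eq_rev χ3 χ3
  have χ104 : χ 104 = 0 := h₁.output_eq_rev χ13 χ13
  have χ8 : χ 8 = 1 := h₀.diag_eq_rev χ104
  have χ64 : χ 64 = 0 := h₁.output_eq_rev χ8 χ8
  have χ208 : χ 208 = 0 := h₁.output_eq_rev χ13 χ39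
  have χ16 : χ 16 = 1 := h₀.diag_eq_rev χ208
  have χ2 : χ 2 = 0 := h₁.diag_eq_rev χ16
  have χ35 : χ 35 = 1 := h₀.output_eq_rev χ2 χ3
  have χ296 : χ 296 = 0 := h₁.output_eq_rev χ35 χ39
  have χ32 : χ 32 = 1 := h₀.right_eq_rev χ2 χ296
  have χ4 : χ 4 = 0 := h₁.diag_eq_rev χ32
  have χ34 : χ 34 = 1 := h₀.output_eq_rev χ4 χ2
  have χ292 : χ 292 = 0 := h₁.output_eq_rev χ34 χ39
  exact h₀.false_of_eq χ64 χ4 χ292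

theorem forcesMonoSolution_four_nine_four_of_le (hN : 432 ≤ N) : ForcesMonoSolution 4 9 4 N := by
  intro χ
  by_contra hχ
  obtain ⟨h₀, h₁⟩ : IsSolutionFree χ 0 4 9 N ∧ IsSolutionFree χ 1 4 4 N := not_or.mp hχ
  have χ1 : χ 1 = 0 := color_one_eq_zero (by omega) h₀ h₁
  have χ3 : χ 3 = 0 := color_three_eq_zero hN h₀ h₁ χ1
  have χ3' : χ 3 = 1 := color_three_eq_one (by omega) h₀ h₁ χ1
  exact zero_ne_one (χ3.symm.trans χ3')

end UpperBound

section LowerBound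

/-- The coloring behind the lower bound for `RR_t(2 * t + 1, t)`. The exception `6 * t + 2` is
`t * x + (2 * t + 1) * y` at `x = y = 2`. The bound `6 * t ^ 2 + 2 * t` lies just below the value at
`(6 * t, 1)`; beyond it only multiples of `t` keep color `0`, because `y ≤ 2` never produces one,
up to the value `12 * t ^ 2 + 7 * t` at `(1, 6 * t)`. -/
def blockColoring (t n : ℕ) : Fin 2 :=
  if n ≤ 2 ∨ 6 * t ≤ n ∧ n ≠ 6 * t + 2 ∧ (n ≤ 6 * t ^ 2 + 2 * t ∨ t ∣ n ∧ n < 12 * t ^ 2 + 7 * t)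
  then 0 else 1

variable {t n N : ℕ}

theorem blockColoring_eq_zero_iff : blockColoring t n = 0 ↔ n ≤ 2 ∨ 6 * t ≤ n ∧ n ≠ 6 * t + 2 ∧
    (n ≤ 6 * t ^ 2 + 2 * t ∨ t ∣ n ∧ n < 12 * t ^ 2 + 7 * t) := by
  unfold blockColoring
  split_ifs with hn <;> simp [hn]

theorem blockColoring_eq_one_iff : blockColoring t n = 1 ↔ 3 ≤ n ∧ (6 * t ≤ n → n ≠ 6 * t + 2 →
    6 * t ^ 2 + 2 * t < n ∧ (t ∣ n → 12 * t ^ 2 + 7 * t ≤ n)) := by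
  unfold blockColoring
  split_ifs <;> grind

theorem isSolutionFree_zero_blockColoring (ht : 3 ≤ t) :
    IsSolutionFree (blockColoring t) 0 t (2 * t + 1) N := by
  rintro ⟨x, y, z, hx, hy, -, hxyz, χx, χy, χz⟩
  rw [Finset.mem_Icc] at hx hy
  rw [blockColoring_eq_zero_iff] at χx χy χz
  rcases χy with y_le | ⟨y_ge, -⟩
  · have not_dvd : ¬ t ∣ z := by
      rw [show z = t * (x + 2 * y) + y by rw [← hxyz]; ring, Nat.dvd_add_right ⟨_, rfl⟩]
      exact Nat.not_dvd_of_pos_of_lt (by omega) (by omega)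
    rcases χx with x_le | ⟨x_ge, -⟩
    · obtain rfl | rfl : x = 1 ∨ x = 2 := by omega
      all_goals obtain rfl | rfl : y = 1 ∨ y = 2 := by omega
      all_goals omega
    · have z_large : 6 * t ^ 2 + 2 * t < z := by nlinarith
      have z_ge : 6 * t ≤ z := by nlinarith
      grind
  · have z_large : 12 * t ^ 2 + 7 * t ≤ z := by nlinarith
    grind

theorem lt_of_blockColoring_eq_one (hn : 6 * t + 2 < n) (χn : blockColoring t n = 1) :
    6 * t ^ 2 + 2 * t < n :=
  ((blockColoring_eq_one_iff.mp χn).2 (by omega) (by omega)).1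

theorem le_of_dvd_of_blockColoring_eq_one (ht : 3 ≤ t) (hn : 6 * t ≤ n) (htn : t ∣ n)
    (χn : blockColoring t n = 1) : 12 * t ^ 2 + 7 * t ≤ n := by
  have not_dvd : ¬ t ∣ 6 * t + 2 := by
    rw [Nat.dvd_add_right (Dvd.intro_left 6 rfl)]
    exact Nat.not_dvd_of_pos_of_lt (by norm_num) ht
  exact ((blockColoring_eq_one_iff.mp χn).2 hn fun h => not_dvd (h ▸ htn)).2 htn

theorem isSolutionFree_one_blockColoring (ht : 3 ≤ t) (hN : N < t * (6 * t ^ 2 + 2 * t + 4)) :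
    IsSolutionFree (blockColoring t) 1 t t N := by
  rintro ⟨x, y, z, -, -, hz, hxyz, χx, χy, χz⟩
  have x_ge : 3 ≤ x := (blockColoring_eq_one_iff.mp χx).1
  have y_ge : 3 ≤ y := (blockColoring_eq_one_iff.mp χy).1
  have z_eq : t * (x + y) = z := by rw [mul_add, hxyz]
  have z_ge : 12 * t ^ 2 + 7 * t ≤ z :=
    le_of_dvd_of_blockColoring_eq_one ht (by nlinarith) ⟨_, z_eq.symm⟩ χz
  have add_ge : 12 * t + 7 ≤ x + y := by nlinarith
  have add_large : 6 * t ^ 2 + 2 * t + 4 ≤ x + y := by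
    rcases (by omega : 6 * t + 2 < x ∨ 6 * t + 2 < y) with x_gt | y_gt
    · linarith [lt_of_blockColoring_eq_one x_gt χx]
    · linarith [lt_of_blockColoring_eq_one y_gt χy]
  have z_large : t * (6 * t ^ 2 + 2 * t + 4) ≤ z := z_eq ▸ Nat.mul_le_mul_left t add_large
  exact (z_large.trans (Finset.mem_Icc.mp hz).2).not_gt hN

theorem le_of_forcesMonoSolution (ht : 3 ≤ t) (hN : ForcesMonoSolution t (2 * t + 1) t N) :
    t * (6 * t ^ 2 + 2 * t + 4) ≤ N := by
  by_contra! N_lt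
  exact (hN (blockColoring t)).elim (isSolutionFree_zero_blockColoring ht)
    (isSolutionFree_one_blockColoring ht N_lt)

end LowerBound

/-- `RR_4(9,4) = 432`: the least positive `N` such that every 2-coloring of
`{1,…,N}` admits a solution to `4x + 9y = z` monochromatic of color 0 or a
solution to `4x + 4y = z` monochromatic of color 1 is `432`. -/
theorem RR_4_9_4 :
    IsLeast {N : ℕ | 0 < N ∧ ∀ χ : ℕ → Fin 2,
      (∃ x y z : ℕ, x ∈ Finset.Icc 1 N ∧ y ∈ Finset.Icc 1 N ∧
        z ∈ Finset.Icc 1 N ∧ 4 * x + 9 * y = z ∧ χ x = 0 ∧ χ y = 0 ∧ χ z = 0) ∨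
      (∃ x y z : ℕ, x ∈ Finset.Icc 1 N ∧ y ∈ Finset.Icc 1 N ∧
        z ∈ Finset.Icc 1 N ∧ 4 * x + 4 * y = z ∧ χ x = 1 ∧ χ y = 1 ∧ χ z = 1)}
      432 := by
  constructor
  · exact ⟨by norm_num, forcesMonoSolution_four_nine_four_of_le le_rfl⟩
  · rintro N ⟨-, hN⟩
    exact le_of_forcesMonoSolution (t := 4) (by norm_num) hN
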